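/- arXiv:2411.16040 — 2 statements merged into one kernel-verified Lean document; each statement's English description precedes it below -/
import Mathlib

section
/- Let (𝓑₁, 𝓑₀) be a Rota-Baxter operator on a crossed module of groups (H, G, t, Φ). Define a ·_{𝓑₀} b = a·𝓑₀(a)·b·𝓑₀(a)⁻¹ on G and Φ̂(a)(p) = Φ(a·𝓑₀(a))(p·𝓑₁(p)) · (Φ(𝓑₀(a))(𝓑₁(p)))⁻¹ for a ∈ G, p ∈ H. Then for all a, b ∈ G and p ∈ H, Φ̂(a ·_{𝓑₀} b)(p) = Φ̂(a)(Φ̂(b)(p)). -/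
/-- A crossed module of groups. -/
structure IsCrossedModule {H G : Type*} [Group H] [Group G]
    (t : H → G) (Φ : G → H → H) : Prop where
  t_mul : ∀ p q : H, t (p * q) = t p * t q
  Φ_mul_hom : ∀ (a : G) (p q : H), Φ a (p * q) = Φ a p * Φ a q
  Φ_bij : ∀ a : G, Function.Bijective (Φ a)
  Φ_one : ∀ p : H, Φ 1 p = p
  Φ_mul : ∀ (a b : G) (p : H), Φ (a * b) p = Φ a (Φ b p)
  peiffer : ∀ p q : H, Φ (t p) q = p * q * p⁻¹
  equivar : ∀ (a : G) (p : H), t (Φ a p) = a * t p * a⁻¹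

/-- Rota-Baxter operator on a group. -/
def IsRotaBaxter {G : Type*} [Group G] (B : G → G) : Prop :=
  ∀ a b : G, B a * B b = B (a * B a * b * (B a)⁻¹)

/-- Rota-Baxter operator on a crossed module of groups. -/
structure IsCMRotaBaxter {H G : Type*} [Group H] [Group G]
    (t : H → G) (Φ : G → H → H) (B₁ : H → H) (B₀ : G → G) : Prop where
  rb₁ : IsRotaBaxter B₁
  rb₀ : IsRotaBaxter B₀
  t_comm : ∀ p : H, t (B₁ p) = B₀ (t p)
  compat : ∀ (a : G) (p : H),
    Φ (B₀ a) (B₁ p) = B₁ (Φ (a * B₀ a) (p * B₁ p) * (Φ (B₀ a) (B₁ p))⁻¹)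

/-- The descended multiplication `p ·_B q = p · B(p) · q · B(p)⁻¹`. -/
def mulB {X : Type*} [Group X] (B : X → X) (p q : X) : X := p * B p * q * (B p)⁻¹

/-- The descended action `Φ̂(a)(p) = Φ(a·B₀(a))(p·B₁(p)) · (Φ(B₀(a))(B₁(p)))⁻¹`. -/
def hatPhi {H G : Type*} [Group H] [Group G] (Φ : G → H → H)
    (B₁ : H → H) (B₀ : G → G) (a : G) (p : H) : H :=
  Φ (a * B₀ a) (p * B₁ p) * (Φ (B₀ a) (B₁ p))⁻¹

/-
The map `a ↦ (a * B₀ a, B₀ a)` turns the descended product into the product of `G × G`, and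
`p ↦ (p * B₁ p, B₁ p)` turns `hatPhi a` into the componentwise action of `(a * B₀ a, B₀ a)` on
`H × H`. The second map is injective, since `p = (p * B₁ p) * (B₁ p)⁻¹`, so `hatPhi` inherits
compatibility with products from `Φ`.
-/

namespace IsRotaBaxter

variable {G : Type*} [Group G] {B : G → G}

theorem map_mulB (hB : IsRotaBaxter B) (a b : G) : B (mulB B a b) = B a * B b :=
  (hB a b).symm

theorem mulB_mul_map_mulB (hB : IsRotaBaxter B) (a b : G) :
    mulB B a b * B (mulB B a b) = (a * B a) * (b * B b) := by
  calc
    mulB B a b * B (mulB B a b) = a * B a * b * (B a)⁻¹ * (B a * B b) := by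
      rw [hB.map_mulB, mulB]
    _ = (a * B a) * (b * B b) := by group

end IsRotaBaxter

section DescendedAction

variable {H G : Type*} [Group H] [Group G] {Φ : G → H → H} {B₁ : H → H} {B₀ : G → G}

theorem IsCMRotaBaxter.map_hatPhi {t : H → G} (hrb : IsCMRotaBaxter t Φ B₁ B₀) (a : G) (p : H) :
    B₁ (hatPhi Φ B₁ B₀ a p) = Φ (B₀ a) (B₁ p) :=
  (hrb.compat a p).symm

theorem hatPhi_mul_map_hatPhi {a : G} {p : H}
    (h : B₁ (hatPhi Φ B₁ B₀ a p) = Φ (B₀ a) (B₁ p)) :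
    hatPhi Φ B₁ B₀ a p * B₁ (hatPhi Φ B₁ B₀ a p) = Φ (a * B₀ a) (p * B₁ p) := by
  rw [h, hatPhi, inv_mul_cancel_right]

theorem stmt3_general (hΦ : ∀ (a b : G) (p : H), Φ (a * b) p = Φ a (Φ b p))
    (hB₀ : IsRotaBaxter B₀)
    (hB₁ : ∀ (a : G) (p : H), B₁ (hatPhi Φ B₁ B₀ a p) = Φ (B₀ a) (B₁ p))
    (a b : G) (p : H) :
    hatPhi Φ B₁ B₀ (mulB B₀ a b) p = hatPhi Φ B₁ B₀ a (hatPhi Φ B₁ B₀ b p) := by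
  set q := hatPhi Φ B₁ B₀ b p with hq
  calc
    hatPhi Φ B₁ B₀ (mulB B₀ a b) p
        = Φ ((a * B₀ a) * (b * B₀ b)) (p * B₁ p) * (Φ (B₀ a * B₀ b) (B₁ p))⁻¹ := by
      rw [hatPhi, hB₀.mulB_mul_map_mulB, hB₀.map_mulB]
    _ = Φ (a * B₀ a) (Φ (b * B₀ b) (p * B₁ p)) * (Φ (B₀ a) (Φ (B₀ b) (B₁ p)))⁻¹ := by
      rw [hΦ (a * B₀ a), hΦ (B₀ a)]
    _ = Φ (a * B₀ a) (q * B₁ q) * (Φ (B₀ a) (B₁ q))⁻¹ := by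
      rw [hq, hatPhi_mul_map_hatPhi (hB₁ b p), hB₁ b p]
    _ = hatPhi Φ B₁ B₀ a q := rfl

end DescendedAction

theorem stmt3 {H G : Type*} [Group H] [Group G] (t : H → G) (Φ : G → H → H)
    (B₁ : H → H) (B₀ : G → G) (hcm : IsCrossedModule t Φ)
    (hrb : IsCMRotaBaxter t Φ B₁ B₀) :
    ∀ (a b : G) (p : H),
      hatPhi Φ B₁ B₀ (mulB B₀ a b) p
        = hatPhi Φ B₁ B₀ a (hatPhi Φ B₁ B₀ b p) :=
  stmt3_general hcm.Φ_mul hrb.rb₀ hrb.map_hatPhi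
end

section
/- Let (𝓑₁, 𝓑₀) be a Rota-Baxter operator on a crossed module of groups (H, G, t, Φ). Let (G ⋉_Φ H, ·_Φ) be the semidirect product group with (a, p) ·_Φ (b, q) = (a·b, p·Φ(a)(q)) and let 𝓑(a, p) = (𝓑₀(a), Φ(𝓑₀(a))(𝓑₁(Φ(𝓑₀(a)⁻¹·a⁻¹)(p)))). Define R₁ on (G × H) × (G × H) by R₁(m, n) = (Ad_{𝓑(m)}(n), Ad_{(𝓑(c)⁻¹)·_Φ c⁻¹}(m)) where c = Ad_{𝓑(m)}(n) and Ad is conjugation in (G ⋉_Φ H, ·_Φ). Define R₀ on G × G by R₀(a, b) = (Ad_{𝓑₀(a)}(b), Ad_{(𝓑₀(d)⁻¹)·d⁻¹}(a)) with d = Ad_{𝓑₀(a)}(b). Then R₁ and R₀ are bijections satisfying the braid relation (R × Id)(Id × R)(R × Id) = (Id × R)(R × Id)(Id × R) on their respective triple products; i.e., (G × H, R₁) and (G, R₀) are set-theoretical solutions of the Yang-Baxter equation. -/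
/-- The semidirect product multiplication `(a,p)·_Φ(b,q) = (a·b, p·Φ(a)q)` on `G × H`. -/
def sdpMul {H G : Type*} [Group H] [Group G] (Φ : G → H → H) (m n : G × H) : G × H :=
  (m.1 * n.1, m.2 * Φ m.1 n.2)

/-- The inverse for `sdpMul`. -/
def sdpInv {H G : Type*} [Group H] [Group G] (Φ : G → H → H) (m : G × H) : G × H :=
  (m.1⁻¹, Φ m.1⁻¹ m.2⁻¹)

/-- The operator `𝓑(a,p) = (B₀(a), Φ(B₀(a))(B₁(Φ(B₀(a)⁻¹·a⁻¹)(p))))` on `G ⋉_Φ H`. -/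
def Bcal {H G : Type*} [Group H] [Group G] (Φ : G → H → H)
    (B₁ : H → H) (B₀ : G → G) (m : G × H) : G × H :=
  (B₀ m.1, Φ (B₀ m.1) (B₁ (Φ ((B₀ m.1)⁻¹ * m.1⁻¹) m.2)))

/-- The Yang-Baxter map `R(m,n) = (Ad_{B(m)}(n), Ad_{B(c)⁻¹·c⁻¹}(m))`, `c = Ad_{B(m)}(n)`,
written for an abstract multiplication `mul` and inversion `inv`. -/
def Rgen {X : Type*} (mul : X → X → X) (inv : X → X) (B : X → X) (z : X × X) : X × X :=
  let c := mul (mul (B z.1) z.2) (inv (B z.1))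
  let d := mul (inv (B c)) (inv c)
  (c, mul (mul d z.1) (inv d))

/-- `R × Id` on triples. -/
def R12 {X : Type*} (R : X × X → X × X) (w : X × X × X) : X × X × X :=
  ((R (w.1, w.2.1)).1, (R (w.1, w.2.1)).2, w.2.2)

/-- `Id × R` on triples. -/
def R23 {X : Type*} (R : X × X → X × X) (w : X × X × X) : X × X × X :=
  (w.1, R w.2)

/- A Rota-Baxter operator `B` on `X` is the same thing as a subset of `X × X` of the form
`{(x * B x, B x)}` that is closed under multiplication. For `B₀` and `B₁` these subsets are
subgroups `Γ₀ ≤ G × G` and `Γ₁ ≤ H × H`, the compatibility condition says that `Γ₀` acts on `Γ₁`,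
and `𝓑` is the operator on `G ⋉ H` attached to the product `Γ₀ Γ₁`, so it is again a Rota-Baxter
operator.

For any Rota-Baxter operator write `R (a, b) = (u, v)`. Then `B u * B v = B a * B b` and
`u * B u * (v * B v) = a * B a * (b * B b)`. Both sides of the braid relation therefore have the
same image under multiplication of triples in `X × X`; as their outer entries agree, so do the
middle ones. -/

section YangBaxter

variable {X : Type*}

/-- `R` is a set-theoretical solution of the Yang-Baxter equation: a bijection of `X × X` satisfying
the braid relation on `X × X × X`. -/
def IsYangBaxterSolution (R : X × X → X × X) : Prop :=
  Function.Bijective R ∧ ∀ w, R12 R (R23 R (R12 R w)) = R23 R (R12 R (R23 R w))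

lemma braid_of_outer_eq {M : Type*} [Semigroup M] [IsCancelMul M] {δ : X → M}
    (hδ : Function.Injective δ) {R : X × X → X × X}
    (hR : ∀ z, δ (R z).1 * δ (R z).2 = δ z.1 * δ z.2) {w : X × X × X}
    (hfst : (R12 R (R23 R (R12 R w))).1 = (R23 R (R12 R (R23 R w))).1)
    (hthird : (R12 R (R23 R (R12 R w))).2.2 = (R23 R (R12 R (R23 R w))).2.2) :
    R12 R (R23 R (R12 R w)) = R23 R (R12 R (R23 R w)) := by
  let π : X × X × X → M := fun w => δ w.1 * δ w.2.1 * δ w.2.2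
  have hR12 (w) : π (R12 R w) = π w := by simp only [π, R12, hR]
  have hR23 (w) : π (R23 R w) = π w := by simp only [π, R23, mul_assoc, hR]
  have hπ : π (R12 R (R23 R (R12 R w))) = π (R23 R (R12 R (R23 R w))) := by
    simp only [hR12, hR23]
  simp only [π, hfst, hthird] at hπ
  exact Prod.ext hfst (Prod.ext (hδ (mul_left_cancel (mul_right_cancel hπ))) hthird)

end YangBaxter

section RotaBaxter

variable {X : Type*} [Group X] {B : X → X}

/-- The embedding `x ↦ (x * B x, B x)` of `X` into `X × X`. Its range is a subgroup exactly when `B`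
is a Rota-Baxter operator. -/
def rbEmbed (B : X → X) (x : X) : X × X := (x * B x, B x)

/-- The descendent multiplication `a ∘ b` of a Rota-Baxter operator. -/
def descendentMul (B : X → X) (a b : X) : X := a * B a * b * (B a)⁻¹

/-- The action of `a` on `b` from the left, giving the first entry of the Yang-Baxter map. -/
def rbLeftAct (B : X → X) (a b : X) : X := B a * b * (B a)⁻¹

/-- The action on `a` of `b` from the right, giving the second entry of the Yang-Baxter map. The
element acted on is the first argument. -/
def rbRightAct (B : X → X) (a b : X) : X :=
  (rbEmbed B (rbLeftAct B a b)).1⁻¹ * a * (rbEmbed B (rbLeftAct B a b)).1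

/-- The Yang-Baxter map of `B`, expressed by the two actions. -/
def rbYangBaxterMap (B : X → X) (z : X × X) : X × X :=
  (rbLeftAct B z.1 z.2, rbRightAct B z.1 z.2)

lemma Rgen_eq_rbYangBaxterMap (B : X → X) :
    Rgen (fun a b : X => a * b) (fun a => a⁻¹) B = rbYangBaxterMap B := by
  funext z
  simp only [Rgen, rbYangBaxterMap, rbRightAct, rbLeftAct, rbEmbed, mul_inv_rev, inv_inv]

lemma rbYangBaxterMap_bijective (B : X → X) : Function.Bijective (rbYangBaxterMap B) := by
  let a (z : X × X) : X := (rbEmbed B z.1).1 * z.2 * (rbEmbed B z.1).1⁻¹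
  refine Function.bijective_iff_has_inverse.2 ⟨fun z => (a z, (B (a z))⁻¹ * z.1 * B (a z)), ?_, ?_⟩
  · intro z
    have ha : a (rbYangBaxterMap B z) = z.1 := by
      simp only [a, rbYangBaxterMap, rbRightAct]
      group
    refine Prod.ext ha ?_
    simp only [ha]
    simp only [rbYangBaxterMap, rbLeftAct]
    group
  · intro z
    have hz : rbLeftAct B (a z) ((B (a z))⁻¹ * z.1 * B (a z)) = z.1 := by
      simp only [rbLeftAct]
      group
    refine Prod.ext hz ?_
    simp only [rbYangBaxterMap, rbRightAct, hz, a]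
    group

lemma descendentMul_rbLeftAct_rbRightAct (B : X → X) (a b : X) :
    descendentMul B (rbLeftAct B a b) (rbRightAct B a b) = descendentMul B a b := by
  calc descendentMul B (rbLeftAct B a b) (rbRightAct B a b)
      = a * rbLeftAct B a b := by simp only [descendentMul, rbRightAct, rbEmbed]; group
    _ = descendentMul B a b := by simp only [descendentMul, rbLeftAct, mul_assoc]

lemma rbEmbed_injective (B : X → X) : Function.Injective (rbEmbed B) := by
  intro x y h
  obtain ⟨hmul, hB⟩ := Prod.ext_iff.1 h
  simp only [rbEmbed] at hmul hB
  exact mul_right_cancel (hB ▸ hmul)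

lemma mem_range_rbEmbed {z : X × X} : z ∈ Set.range (rbEmbed B) ↔ B (z.1 * z.2⁻¹) = z.2 := by
  constructor
  · rintro ⟨x, rfl⟩
    simp only [rbEmbed, mul_inv_cancel_right]
  · intro h
    exact ⟨z.1 * z.2⁻¹, by simp only [rbEmbed, h, inv_mul_cancel_right]⟩

lemma isRotaBaxter_iff_rbEmbed_mul_mem_range :
    IsRotaBaxter B ↔ ∀ a b, rbEmbed B a * rbEmbed B b ∈ Set.range (rbEmbed B) := by
  refine forall₂_congr fun a b => ?_
  have h : (rbEmbed B a * rbEmbed B b).1 * (rbEmbed B a * rbEmbed B b).2⁻¹ =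
      a * B a * b * (B a)⁻¹ := by
    simp only [rbEmbed, Prod.mk_mul_mk]
    group
  rw [mem_range_rbEmbed, h, eq_comm, rbEmbed, rbEmbed, Prod.mk_mul_mk]

namespace IsRotaBaxter

lemma rbEmbed_descendentMul (hB : IsRotaBaxter B) (a b : X) :
    rbEmbed B (descendentMul B a b) = rbEmbed B a * rbEmbed B b := by
  have h : B (descendentMul B a b) = B a * B b := (hB a b).symm
  refine Prod.ext ?_ h
  simp only [rbEmbed, h, Prod.mk_mul_mk]
  simp only [descendentMul]
  group

lemma rbEmbed_one (hB : IsRotaBaxter B) : rbEmbed B 1 = 1 := by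
  have h : B 1 = 1 := by simpa using hB 1 1
  simp only [rbEmbed, h, mul_one, Prod.mk_one_one]

lemma rbEmbed_inv_mem_range (hB : IsRotaBaxter B) (a : X) :
    (rbEmbed B a)⁻¹ ∈ Set.range (rbEmbed B) := by
  refine ⟨(B a)⁻¹ * a⁻¹ * B a, eq_inv_of_mul_eq_one_right ?_⟩
  have h : descendentMul B a ((B a)⁻¹ * a⁻¹ * B a) = 1 := by
    simp only [descendentMul]
    group
  rw [← hB.rbEmbed_descendentMul, h, hB.rbEmbed_one]

lemma rbEmbed_rbLeftAct_mul_rbEmbed_rbRightAct (hB : IsRotaBaxter B) (a b : X) :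
    rbEmbed B (rbLeftAct B a b) * rbEmbed B (rbRightAct B a b) = rbEmbed B a * rbEmbed B b := by
  rw [← hB.rbEmbed_descendentMul, descendentMul_rbLeftAct_rbRightAct, hB.rbEmbed_descendentMul]

lemma map_rbLeftAct_mul_map_rbRightAct (hB : IsRotaBaxter B) (a b : X) :
    B (rbLeftAct B a b) * B (rbRightAct B a b) = B a * B b :=
  congrArg Prod.snd (hB.rbEmbed_rbLeftAct_mul_rbEmbed_rbRightAct a b)

lemma rbLeftAct_rbLeftAct (hB : IsRotaBaxter B) (a b c : X) :
    rbLeftAct B (rbLeftAct B a b) (rbLeftAct B (rbRightAct B a b) c) =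
      rbLeftAct B a (rbLeftAct B b c) := by
  have conj_conj (x y : X) : rbLeftAct B x (rbLeftAct B y c) = B x * B y * c * (B x * B y)⁻¹ := by
    simp only [rbLeftAct]
    group
  rw [conj_conj, conj_conj, hB.map_rbLeftAct_mul_map_rbRightAct]

lemma rbLeftAct_descendentMul (hB : IsRotaBaxter B) (a b c : X) :
    rbLeftAct B a (descendentMul B b c) =
      descendentMul B (rbLeftAct B a b) (rbLeftAct B (rbRightAct B a b) c) := by
  calc rbLeftAct B a (descendentMul B b c)
      = rbLeftAct B a b * rbLeftAct B a (rbLeftAct B b c) := by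
        simp only [rbLeftAct, descendentMul]
        group
    _ = rbLeftAct B a b *
          rbLeftAct B (rbLeftAct B a b) (rbLeftAct B (rbRightAct B a b) c) := by
        rw [hB.rbLeftAct_rbLeftAct]
    _ = descendentMul B (rbLeftAct B a b) (rbLeftAct B (rbRightAct B a b) c) := by
        simp only [rbLeftAct.eq_def B (rbLeftAct B a b), descendentMul, mul_assoc]

lemma rbRightAct_rbRightAct (hB : IsRotaBaxter B) (a b c : X) :
    rbRightAct B (rbRightAct B a b) c = rbRightAct B a (descendentMul B b c) := by
  rw [rbRightAct.eq_def B a (descendentMul B b c), hB.rbLeftAct_descendentMul,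
    hB.rbEmbed_descendentMul, Prod.fst_mul, rbRightAct.eq_def B (rbRightAct B a b) c,
    rbRightAct.eq_def B a b]
  simp only [mul_inv_rev, mul_assoc]

theorem isYangBaxterSolution (hB : IsRotaBaxter B) :
    IsYangBaxterSolution (Rgen (fun a b : X => a * b) (fun a => a⁻¹) B) := by
  rw [Rgen_eq_rbYangBaxterMap]
  refine ⟨rbYangBaxterMap_bijective B, fun ⟨a, b, c⟩ => braid_of_outer_eq (rbEmbed_injective B)
    (fun z => hB.rbEmbed_rbLeftAct_mul_rbEmbed_rbRightAct z.1 z.2)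
    (hB.rbLeftAct_rbLeftAct a b c) ?_⟩
  calc rbRightAct B (rbRightAct B a b) c
      = rbRightAct B a (descendentMul B b c) := hB.rbRightAct_rbRightAct a b c
    _ = rbRightAct B a (descendentMul B (rbLeftAct B b c) (rbRightAct B b c)) := by
        rw [descendentMul_rbLeftAct_rbRightAct]
    _ = rbRightAct B (rbRightAct B a (rbLeftAct B b c)) (rbRightAct B b c) :=
        (hB.rbRightAct_rbRightAct _ _ _).symm

end IsRotaBaxter

end RotaBaxter

section SemidirectProduct

open SemidirectProduct

variable {H G : Type*} [Group H] [Group G] {φ : G →* MulAut H} {B₁ : H → H} {B₀ : G → G}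

/-- The operator `Bcal` on Mathlib's semidirect product, whose `H`-component comes first. -/
def semidirectOp (φ : G →* MulAut H) (B₁ : H → H) (B₀ : G → G) (x : H ⋊[φ] G) : H ⋊[φ] G :=
  ⟨φ (B₀ x.right) (B₁ (φ ((B₀ x.right)⁻¹ * x.right⁻¹) x.left)), B₀ x.right⟩

/-- The componentwise inclusion of `H × H`, through which the range of `rbEmbed B₁` is multiplied
with that of `rbEmbed B₀`. -/
def inlPair (φ : G →* MulAut H) : H × H →* (H ⋊[φ] G) × (H ⋊[φ] G) :=
  MonoidHom.prodMap inl inl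

/-- The componentwise inclusion of `G × G`, the counterpart of `inlPair`. -/
def inrPair (φ : G →* MulAut H) : G × G →* (H ⋊[φ] G) × (H ⋊[φ] G) :=
  MonoidHom.prodMap inr inr

lemma inlPair_mul_inrPair (h : H × H) (g : G × G) :
    inlPair φ h * inrPair φ g =
      inrPair φ g * inlPair φ (φ g.1⁻¹ h.1, φ g.2⁻¹ h.2) := by
  have inl_mul_inr (n : H) (k : G) : (inl n * inr k : H ⋊[φ] G) = inr k * inl (φ k⁻¹ n) := by
    rw [map_inv, inl_aut_inv, mul_assoc, map_inv, mul_inv_cancel_left]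
  exact Prod.ext (inl_mul_inr _ _) (inl_mul_inr _ _)

lemma rbEmbed_semidirectOp (x : H ⋊[φ] G) :
    rbEmbed (semidirectOp φ B₁ B₀) x =
      inrPair φ (rbEmbed B₀ x.right) *
        inlPair φ (rbEmbed B₁ (φ ((B₀ x.right)⁻¹ * x.right⁻¹) x.left)) := by
  ext <;> simp [rbEmbed, semidirectOp, inrPair, inlPair]

lemma inrPair_mul_inlPair_mem_range_rbEmbed (a : G) (p : H) :
    inrPair φ (rbEmbed B₀ a) * inlPair φ (rbEmbed B₁ p) ∈
      Set.range (rbEmbed (semidirectOp φ B₁ B₀)) := by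
  refine ⟨⟨φ (a * B₀ a) p, a⟩, ?_⟩
  have h : φ ((B₀ a)⁻¹ * a⁻¹) (φ (a * B₀ a) p) = p := by
    rw [← mul_inv_rev, map_inv, MulAut.inv_apply_self]
  rw [rbEmbed_semidirectOp, h]

lemma act_inv_rbEmbed_mem_range (hB₀ : IsRotaBaxter B₀)
    (hcompat : ∀ a p, φ (B₀ a) (B₁ p) =
      B₁ (φ (a * B₀ a) (p * B₁ p) * (φ (B₀ a) (B₁ p))⁻¹)) (b : G) (p : H) :
    (φ (rbEmbed B₀ b).1⁻¹ (rbEmbed B₁ p).1, φ (rbEmbed B₀ b).2⁻¹ (rbEmbed B₁ p).2) ∈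
      Set.range (rbEmbed B₁) := by
  obtain ⟨c, hc⟩ := hB₀.rbEmbed_inv_mem_range b
  rw [← Prod.fst_inv, ← Prod.snd_inv, ← hc]
  exact mem_range_rbEmbed.2 (hcompat c p).symm

theorem isRotaBaxter_semidirectOp (hB₁ : IsRotaBaxter B₁) (hB₀ : IsRotaBaxter B₀)
    (hcompat : ∀ a p, φ (B₀ a) (B₁ p) =
      B₁ (φ (a * B₀ a) (p * B₁ p) * (φ (B₀ a) (B₁ p))⁻¹)) :
    IsRotaBaxter (semidirectOp φ B₁ B₀) := by
  refine isRotaBaxter_iff_rbEmbed_mul_mem_range.2 fun x y => ?_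
  rw [rbEmbed_semidirectOp, rbEmbed_semidirectOp]
  generalize φ ((B₀ x.right)⁻¹ * x.right⁻¹) x.left = p
  generalize φ ((B₀ y.right)⁻¹ * y.right⁻¹) y.left = q
  obtain ⟨r, hr⟩ := act_inv_rbEmbed_mem_range hB₀ hcompat y.right p
  have hmul : inrPair φ (rbEmbed B₀ x.right) * inlPair φ (rbEmbed B₁ p) *
        (inrPair φ (rbEmbed B₀ y.right) * inlPair φ (rbEmbed B₁ q)) =
      inrPair φ (rbEmbed B₀ (descendentMul B₀ x.right y.right)) *
        inlPair φ (rbEmbed B₁ (descendentMul B₁ r q)) := by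
    rw [mul_assoc, ← mul_assoc (inlPair φ _), inlPair_mul_inrPair, ← hr,
      hB₀.rbEmbed_descendentMul, hB₁.rbEmbed_descendentMul, map_mul, map_mul]
    simp only [mul_assoc]
  exact hmul ▸ inrPair_mul_inlPair_mem_range_rbEmbed _ _

/-- The identification of the underlying set `G × H` of `G ⋉_Φ H` with Mathlib's `H ⋊[φ] G`. -/
def prodEquivSemidirectProduct (φ : G →* MulAut H) : G × H ≃ H ⋊[φ] G :=
  (Equiv.prodComm G H).trans equivProd.symm

/-- The automorphism action of a crossed module. -/
def IsCrossedModule.toMulAut {t : H → G} {Φ : G → H → H} (hcm : IsCrossedModule t Φ) :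
    G →* MulAut H where
  toFun a :=
    { toFun := Φ a
      invFun := Φ a⁻¹
      left_inv := fun p => by rw [← hcm.Φ_mul, inv_mul_cancel, hcm.Φ_one]
      right_inv := fun p => by rw [← hcm.Φ_mul, mul_inv_cancel, hcm.Φ_one]
      map_mul' := hcm.Φ_mul_hom a }
  map_one' := MulEquiv.ext hcm.Φ_one
  map_mul' a b := MulEquiv.ext (hcm.Φ_mul a b)

end SemidirectProduct

theorem stmt8_general {H G : Type*} [Group H] [Group G] (φ : G →* MulAut H)
    {B₁ : H → H} {B₀ : G → G} (hB₁ : IsRotaBaxter B₁) (hB₀ : IsRotaBaxter B₀)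
    (hcompat : ∀ a p, φ (B₀ a) (B₁ p) =
      B₁ (φ (a * B₀ a) (p * B₁ p) * (φ (B₀ a) (B₁ p))⁻¹)) :
    IsYangBaxterSolution (Rgen (sdpMul fun a => φ a) (sdpInv fun a => φ a)
        (Bcal (fun a => φ a) B₁ B₀)) ∧
      IsYangBaxterSolution (Rgen (fun a b : G => a * b) (fun a => a⁻¹) B₀) := by
  let e := prodEquivSemidirectProduct φ
  -- The multiplication and inverse transported along `e` unfold to `sdpMul` and `sdpInv`.
  let _ : Group (G × H) := e.group
  have hB : IsRotaBaxter (Bcal (fun a => φ a) B₁ B₀) := fun m n =>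
    congrArg e.symm (isRotaBaxter_semidirectOp hB₁ hB₀ hcompat (e m) (e n))
  exact ⟨hB.isYangBaxterSolution, hB₀.isYangBaxterSolution⟩

theorem stmt8 {H G : Type*} [Group H] [Group G] (t : H → G) (Φ : G → H → H)
    (B₁ : H → H) (B₀ : G → G) (hcm : IsCrossedModule t Φ)
    (hrb : IsCMRotaBaxter t Φ B₁ B₀) :
    -- R₁, built from 𝓑 and conjugation in G ⋉_Φ H, is a set-theoretical YBE solution
    (Function.Bijective (Rgen (sdpMul Φ) (sdpInv Φ) (Bcal Φ B₁ B₀)) ∧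
      ∀ w : (G × H) × (G × H) × (G × H),
        R12 (Rgen (sdpMul Φ) (sdpInv Φ) (Bcal Φ B₁ B₀))
            (R23 (Rgen (sdpMul Φ) (sdpInv Φ) (Bcal Φ B₁ B₀))
              (R12 (Rgen (sdpMul Φ) (sdpInv Φ) (Bcal Φ B₁ B₀)) w))
          = R23 (Rgen (sdpMul Φ) (sdpInv Φ) (Bcal Φ B₁ B₀))
              (R12 (Rgen (sdpMul Φ) (sdpInv Φ) (Bcal Φ B₁ B₀))
                (R23 (Rgen (sdpMul Φ) (sdpInv Φ) (Bcal Φ B₁ B₀)) w))) ∧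
    -- R₀, built from B₀ and conjugation in G, is a set-theoretical YBE solution
    (Function.Bijective (Rgen (fun a b : G => a * b) (fun a => a⁻¹) B₀) ∧
      ∀ w : G × G × G,
        R12 (Rgen (fun a b : G => a * b) (fun a => a⁻¹) B₀)
            (R23 (Rgen (fun a b : G => a * b) (fun a => a⁻¹) B₀)
              (R12 (Rgen (fun a b : G => a * b) (fun a => a⁻¹) B₀) w))
          = R23 (Rgen (fun a b : G => a * b) (fun a => a⁻¹) B₀)
              (R12 (Rgen (fun a b : G => a * b) (fun a => a⁻¹) B₀)
                (R23 (Rgen (fun a b : G => a * b) (fun a => a⁻¹) B₀) w))) :=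
  stmt8_general hcm.toMulAut hrb.rb₁ hrb.rb₀ hrb.compat
end
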